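/- arXiv:1812.01682 — 3 statements merged into one kernel-verified Lean document; each statement's English description precedes it below -/
import Mathlib

section
/- The number of Fishburn permutations of size n avoiding the classical pattern 321 equals the sum over j from 0 to ⌊(n−1)/2⌋ of ((−1)^j/(n−j))·binom(n−j, j)·binom(2n−3j, n−j+1). -/
open Finset

/-- The list of values of a permutation of `Fin n` (0-based values). -/
def permList {n : ℕ} (π : Equiv.Perm (Fin n)) : List ℕ :=
  (List.finRange n).map fun i => (π i : ℕ)

/-- A sequence `w` of distinct integers contains the classical pattern `p`:
some subsequence of `w` is order-isomorphic to `p`. -/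
def SeqContains (w p : List ℕ) : Prop :=
  ∃ f : Fin p.length → Fin w.length, StrictMono f ∧
    ∀ i j : Fin p.length, p.get i < p.get j ↔ w.get (f i) < w.get (f j)

/-- A permutation avoids a classical pattern (given as the list of its values). -/
def AvoidsPat {n : ℕ} (π : Equiv.Perm (Fin n)) (p : List ℕ) : Prop :=
  ¬ SeqContains (permList π) p

/-- `π` is a Fishburn permutation: it avoids the bivincular pattern (231,{1},{1}),
i.e. there are no positions `i < k` with `π i = π k + 1` and `π i < π (i+1)`
(0-based values, so `π i = π k + 1` encodes `π(i) > 1` and `π(k) = π(i) - 1`). -/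
def IsFishburn {n : ℕ} (π : Equiv.Perm (Fin n)) : Prop :=
  ∀ i k : ℕ, ∀ hi : i < n, ∀ hk : k < n, ∀ _hik : i < k,
    (π ⟨i, hi⟩ : ℕ) = (π ⟨k, hk⟩ : ℕ) + 1 →
    ¬ ((π ⟨i, hi⟩ : ℕ) < (π ⟨i + 1, by omega⟩ : ℕ))

/-- A permutation is indecomposable if it is not the direct sum of two nonempty
permutations, i.e. no proper nonempty initial segment of positions maps onto the
corresponding initial segment of values. -/
def IsIndecomposable {n : ℕ} (π : Equiv.Perm (Fin n)) : Prop :=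
  ¬ ∃ k : ℕ, 0 < k ∧ k < n ∧ ∀ i : Fin n, (i : ℕ) < k → (π i : ℕ) < k

/-!
Delete the largest letter of a permutation: Fishburn permutations avoiding 321 become the nodes of a
generating tree. Reading words backwards, the sites where a new maximum may be inserted form an
initial segment `0, …, m`, and the `m + 1` children are governed by `m` together with a flag `c`
telling whether the first letter is the maximum: inserting at site `0` gives label `(m + 1, true)`,
inserting at site `s + 1` gives `(s + 1, false)`, or `(s, false)` if `c` holds.
Taking differences in `m`, the number of `l`-th generation descendants of `(m, false)` obeys the
recurrence satisfied by the coefficient of `x ^ l` in `F ^ (m + 1)`, where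
`F = 1 + x * F ^ 2 - x ^ 2 * (F ^ 2 - F)`. Lagrange inversion writes that coefficient as an
alternating sum, and the permutations of size `n` are the `n`-th generation descendants of the
empty word, which has label `(0, false)`.
-/

namespace Fishburn321

section BallotSums

/-- The coefficient of `x ^ a * y ^ j` in `F ^ k`, where `F` is the power series with constant term
`1` solving `F = 1 + x * F ^ 2 + y * (F ^ 2 - F)`; for `a > 0` it is given by Lagrange inversion.
The case `a = 0` is separate because the formula reads `0 / 0` at `a = j = 0`. -/
def ballotTerm : ℕ → ℕ → ℕ → ℚ
  | 0, j, _ => if j = 0 then 1 else 0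
  | a + 1, j, k => k / (a + j + 1) * (a + j + 1).choose j * (2 * a + j + k + 1).choose a

/-- The coefficient of `x ^ l` in `F ^ k`, where `F` is the power series with constant term `1`
solving `F = 1 + x * F ^ 2 - x ^ 2 * (F ^ 2 - F)`, that is, `ballotTerm` summed along `y = -x ^ 2`.
The range of summation is cut off where the terms with `l ≤ 2 * j` begin, which vanish for `j > 0`
and contain truncated subtractions. -/
def ballotSum (l k : ℕ) : ℚ :=
  ∑ j ∈ range ((l - 1) / 2 + 1), (-1) ^ j * ballotTerm (l - 2 * j) j k

theorem ballotTerm_succ_eq_factorial (a j k : ℕ) :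
    ballotTerm (a + 1) j k =
      k * (a + j).factorial * (2 * a + j + k + 1).factorial /
        (j.factorial * (a + 1).factorial * a.factorial * (a + j + k + 1).factorial) := by
  have hpos (m : ℕ) : (m.factorial : ℚ) ≠ 0 := mod_cast m.factorial_ne_zero
  have h_shift : (a + j + 1 : ℚ) ≠ 0 := by positivity
  rw [ballotTerm, Nat.cast_choose ℚ (by lia : j ≤ a + j + 1),
    Nat.cast_choose ℚ (by lia : a ≤ 2 * a + j + k + 1), show a + j + 1 - j = a + 1 by lia,
    show 2 * a + j + k + 1 - a = a + j + k + 1 by lia, Nat.factorial_succ (a + j)]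
  push_cast
  field_simp [hpos]

theorem ballotTerm_one (j k : ℕ) : ballotTerm 1 j k = k := by
  have : (j + 1 : ℚ) ≠ 0 := by positivity
  simp [ballotTerm, field]

theorem ballotTerm_zero_right (a j : ℕ) : ballotTerm (a + 1) j 0 = 0 := by
  simp [ballotTerm]

theorem ballotTerm_zero_left {j : ℕ} (hj : 0 < j) (k : ℕ) : ballotTerm 0 j k = 0 := by
  simp [ballotTerm, hj.ne']

theorem ballotTerm_add_two_zero_succ (a k : ℕ) :
    ballotTerm (a + 2) 0 (k + 1) = ballotTerm (a + 2) 0 k + ballotTerm (a + 1) 0 (k + 2) := by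
  have hpos (m : ℕ) : (m.factorial : ℚ) ≠ 0 := mod_cast m.factorial_ne_zero
  simp only [ballotTerm_succ_eq_factorial]
  rw [show 2 * (a + 1) + 0 + (k + 1) + 1 = 2 * a + k + 3 + 1 by ring,
    show 2 * (a + 1) + 0 + k + 1 = 2 * a + k + 3 by ring,
    show 2 * a + 0 + (k + 2) + 1 = 2 * a + k + 3 by ring,
    show a + 1 + 0 + (k + 1) + 1 = a + k + 2 + 1 by ring,
    show a + 1 + 0 + k + 1 = a + k + 2 by ring,
    show a + 0 + (k + 2) + 1 = a + k + 2 + 1 by ring]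
  simp only [Nat.factorial_succ, Nat.add_zero]
  push_cast
  field_simp [hpos]
  ring

theorem ballotTerm_succ_succ (a j k : ℕ) :
    ballotTerm a (j + 1) (k + 1) =
      ballotTerm a (j + 1) k + ballotTerm (a - 1) (j + 1) (k + 2) +
        ballotTerm a j (k + 2) - ballotTerm a j (k + 1) := by
  match a with
  | 0 => simp [ballotTerm]
  | 1 =>
    simp only [ballotTerm_one, ballotTerm_zero_left j.succ_pos, Nat.sub_self]
    push_cast
    ring
  | a + 2 =>
    have hpos (m : ℕ) : (m.factorial : ℚ) ≠ 0 := mod_cast m.factorial_ne_zero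
    simp only [Nat.add_one_sub_one, ballotTerm_succ_eq_factorial]
    -- Every factorial is rewritten over one of `(2a+j+k+4)!`, `(a+j+k+3)!`, `(a+j)!`, `a!`, `j!`.
    rw [show 2 * (a + 1) + (j + 1) + (k + 1) + 1 = 2 * a + j + k + 4 + 1 by ring,
      show 2 * (a + 1) + (j + 1) + k + 1 = 2 * a + j + k + 4 by ring,
      show 2 * a + (j + 1) + (k + 2) + 1 = 2 * a + j + k + 4 by ring,
      show 2 * (a + 1) + j + (k + 2) + 1 = 2 * a + j + k + 4 + 1 by ring,
      show 2 * (a + 1) + j + (k + 1) + 1 = 2 * a + j + k + 4 by ring,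
      show a + 1 + (j + 1) + (k + 1) + 1 = a + j + k + 3 + 1 by ring,
      show a + 1 + (j + 1) + k + 1 = a + j + k + 3 by ring,
      show a + (j + 1) + (k + 2) + 1 = a + j + k + 3 + 1 by ring,
      show a + 1 + j + (k + 2) + 1 = a + j + k + 3 + 1 by ring,
      show a + 1 + j + (k + 1) + 1 = a + j + k + 3 by ring,
      show a + 1 + (j + 1) = a + j + 1 + 1 by ring,
      show a + (j + 1) = a + j + 1 by ring,
      show a + 1 + j = a + j + 1 by ring]
    simp only [Nat.factorial_succ]
    push_cast
    field_simp [hpos]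
    ring

theorem ballotSum_eq_sum_range {l N : ℕ} (hN : (l - 1) / 2 + 1 ≤ N) (k : ℕ) :
    ballotSum l k = ∑ j ∈ range N, (-1) ^ j * ballotTerm (l - 2 * j) j k := by
  refine (eventually_constant_sum (fun j hj ↦ ?_) hN).symm
  rw [show l - 2 * j = 0 by lia, ballotTerm_zero_left (by lia), mul_zero]

theorem ballotSum_zero (k : ℕ) : ballotSum 0 k = 1 := by
  simp [ballotSum, ballotTerm]

theorem ballotSum_one (k : ℕ) : ballotSum 1 k = k := by
  simp [ballotSum, ballotTerm_one]

theorem ballotSum_succ_zero (l : ℕ) : ballotSum (l + 1) 0 = 0 := by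
  refine sum_eq_zero fun j hj ↦ ?_
  have hj := mem_range.mp hj
  obtain ⟨a, ha⟩ : ∃ a, l + 1 - 2 * j = a + 1 := ⟨l - 2 * j, by lia⟩
  rw [ha, ballotTerm_zero_right, mul_zero]

/-- Coefficientwise form of `F ^ (k + 1) = F ^ k * (1 + x * F ^ 2 - x ^ 2 * (F ^ 2 - F))`. -/
theorem ballotSum_add_two_succ (l k : ℕ) :
    ballotSum (l + 2) (k + 1) =
      ballotSum (l + 2) k + ballotSum (l + 1) (k + 2) - ballotSum l (k + 2) +
        ballotSum l (k + 1) := by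
  have hterm (j : ℕ) :
      (-1 : ℚ) ^ (j + 1) * ballotTerm (l + 2 - 2 * (j + 1)) (j + 1) (k + 1) =
        (-1) ^ (j + 1) * ballotTerm (l + 2 - 2 * (j + 1)) (j + 1) k +
          (-1) ^ (j + 1) * ballotTerm (l + 1 - 2 * (j + 1)) (j + 1) (k + 2) -
          (-1) ^ j * ballotTerm (l - 2 * j) j (k + 2) +
          (-1) ^ j * ballotTerm (l - 2 * j) j (k + 1) := by
    rw [show l + 2 - 2 * (j + 1) = l - 2 * j by lia,
      show l + 1 - 2 * (j + 1) = l - 2 * j - 1 by lia, ballotTerm_succ_succ]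
    ring
  rw [ballotSum_eq_sum_range (by lia : _ ≤ l + 1 + 1) (k + 1),
    ballotSum_eq_sum_range (by lia : _ ≤ l + 1 + 1) k,
    ballotSum_eq_sum_range (by lia : _ ≤ l + 1 + 1) (k + 2),
    ballotSum_eq_sum_range (by lia : _ ≤ l + 1) (k + 2),
    ballotSum_eq_sum_range (by lia : _ ≤ l + 1) (k + 1)]
  simp only [sum_range_succ' _ (l + 1), hterm, sum_add_distrib, sum_sub_distrib, mul_zero,
    Nat.sub_zero, pow_zero, one_mul, ballotTerm_add_two_zero_succ]
  ring

theorem ballotSum_one_right {l : ℕ} (hl : 1 ≤ l) :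
    ballotSum l 1 =
      ∑ j ∈ range ((l - 1) / 2 + 1),
        (-1 : ℚ) ^ j / ((l : ℚ) - (j : ℚ)) * ((l - j).choose j) *
          ((2 * l - 3 * j).choose (l - j + 1)) := by
  refine sum_congr rfl fun j hj ↦ ?_
  have hj := mem_range.mp hj
  obtain ⟨a, rfl⟩ : ∃ a, l = a + 1 + 2 * j := ⟨l - 1 - 2 * j, by lia⟩
  rw [show a + 1 + 2 * j - 2 * j = a + 1 by lia, show a + 1 + 2 * j - j = a + j + 1 by lia,
    show 2 * (a + 1 + 2 * j) - 3 * j = 2 * a + j + 1 + 1 by lia,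
    Nat.choose_symm_of_eq_add (by lia : 2 * a + j + 1 + 1 = a + j + 1 + 1 + a), ballotTerm]
  push_cast
  ring

end BallotSums

section Descendants

/-- The number of `l`-th generation descendants of a node labelled `(m, c)` in the generating tree
in which `(m, c)` has the children `(m + 1, true)` and, for each `s < m`, `(s, false)` if `c` holds
and `(s + 1, false)` otherwise. -/
def descendants : ℕ → ℕ → Bool → ℕ
  | 0, _, _ => 1
  | l + 1, m, c =>
    descendants l (m + 1) true + ∑ s ∈ range m, descendants l (if c then s else s + 1) false

theorem descendants_succ_true_add (l m : ℕ) :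
    descendants (l + 1) m true + descendants l m false =
      descendants (l + 1) m false + descendants l 0 false := by
  have telescope := (sum_range_succ (descendants l · false) m).symm.trans
    (sum_range_succ' (descendants l · false) m)
  simp only [descendants, if_true, Bool.false_eq_true, if_false]
  lia

theorem descendants_succ_zero (l : ℕ) (c : Bool) :
    descendants (l + 1) 0 c = descendants l 1 true := by
  simp [descendants]

theorem descendants_succ_succ_false (l m : ℕ) :
    descendants (l + 1) (m + 1) false + descendants l (m + 1) true =
      descendants (l + 1) m false + descendants l (m + 2) true + descendants l (m + 1) false := by
  simp only [descendants, sum_range_succ, Bool.false_eq_true, if_false]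
  lia

theorem descendants_false_eq_ballotSum (l m : ℕ) :
    (descendants l m false : ℚ) = ballotSum l (m + 1) := by
  induction l using Nat.twoStepInduction generalizing m with
  | zero => simp [descendants, ballotSum_zero]
  | one => simp [descendants, ballotSum_one, add_comm]
  | more l ih ih_succ =>
    have htrue (m : ℕ) : (descendants (l + 1) m true : ℚ) =
        ballotSum (l + 1) (m + 1) - ballotSum l (m + 1) + ballotSum l 1 := by
      have := congrArg (Nat.cast (R := ℚ)) (descendants_succ_true_add l m)
      push_cast [ih, ih_succ] at this
      linarith
    induction m with
    | zero =>
      rw [descendants_succ_zero, htrue, ballotSum_add_two_succ, ballotSum_succ_zero]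
      ring
    | succ m ihm =>
      have := congrArg (Nat.cast (R := ℚ)) (descendants_succ_succ_false (l + 1) m)
      push_cast [htrue, ih_succ, ihm] at this
      rw [ballotSum_add_two_succ]
      linarith

end Descendants

section Words

/-- Fishburn condition on a word `w`, by recursion over its suffixes: no letter `v + 1` is both
followed immediately by a larger letter and followed somewhere by `v`. -/
def FishburnWord : List ℕ → Prop
  | [] => True
  | x :: t => (∀ v ∈ t, x = v + 1 → ∀ y ∈ t.head?, y ≤ x) ∧ FishburnWord t

/-- The word `w` avoids the classical pattern 321. -/
def Avoids321 (w : List ℕ) : Prop :=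
  w.Triplewise fun a b c ↦ ¬ (c < b ∧ b < a)

theorem fishburnWord_iff_getElem (w : List ℕ) :
    FishburnWord w ↔ ∀ i k : ℕ, ∀ (_ : i < k) (_ : k < w.length),
      w[i] = w[k] + 1 → ¬ w[i] < w[i + 1] := by
  induction w with
  | nil => simp [FishburnWord]
  | cons x t ih =>
    rw [FishburnWord, ih]
    constructor
    · rintro ⟨hx, ht⟩ (_ | i) (_ | k) hik hk heq
      · lia
      · have hk' : k < t.length := by simpa using hk
        have h_head : t[0] ∈ t.head? := by simp [List.head?_eq_getElem?]
        simpa using hx t[k] (List.getElem_mem _) heq t[0] h_head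
      · lia
      · exact ht i k (by lia) (by simpa using hk) heq
    · refine fun h ↦ ⟨fun v hv hxv y hy ↦ ?_, fun i k hik hk ↦ ?_⟩
      · obtain ⟨k, hk, rfl⟩ := List.mem_iff_getElem.mp hv
        obtain ⟨_, rfl⟩ : ∃ _ : 0 < t.length, t[0] = y := by
          simpa [List.head?_eq_getElem?, List.getElem?_eq_some_iff] using hy
        simpa using h 0 (k + 1) k.succ_pos (by simpa using hk) hxv
      · exact h (i + 1) (k + 1) (by lia) (by simpa using hk)

theorem not_seqContains_321_iff (w : List ℕ) : ¬ SeqContains w [3, 2, 1] ↔ Avoids321 w := by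
  rw [Avoids321, List.triplewise_iff_getElem, not_iff_comm]
  push Not
  constructor
  · rintro ⟨i, j, k, hij, hjk, hk, hlt⟩
    refine ⟨![⟨i, by lia⟩, ⟨j, by lia⟩, ⟨k, hk⟩], ?_, ?_⟩
    · refine Fin.strictMono_iff_lt_succ.mpr fun i ↦ ?_
      fin_cases i
      exacts [hij, hjk]
    · intro i j
      change Fin 3 at i j
      fin_cases i <;> fin_cases j <;> simp <;> lia
  · rintro ⟨f, hf, h⟩
    exact ⟨f (0 : Fin 3), f (1 : Fin 3), f (2 : Fin 3), hf (by decide), hf (by decide),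
      (f (2 : Fin 3)).isLt, (h (2 : Fin 3) (1 : Fin 3)).mp (by decide),
      (h (1 : Fin 3) (0 : Fin 3)).mp (by decide)⟩

variable {n : ℕ} {P Q : List ℕ}

theorem fishburnWord_insert_max_iff (hP : ∀ x ∈ P, x < n) (hQ : ∀ x ∈ Q, x < n) :
    FishburnWord (P ++ n :: Q) ↔
      FishburnWord (P ++ Q) ∧ ∀ v ∈ Q, P.getLast? ≠ some (v + 1) := by
  induction P with
  | nil => grind [FishburnWord]
  | cons x P ih =>
    rw [List.cons_append, List.cons_append, FishburnWord, FishburnWord,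
      ih fun y hy ↦ hP y (List.mem_cons_of_mem x hy)]
    have hx : x < n := hP x List.mem_cons_self
    rcases P with _ | ⟨y, P⟩
    · have h_head : (∀ v ∈ n :: Q, x = v + 1 → ∀ y ∈ (n :: Q).head?, y ≤ x) ↔
          ∀ v ∈ Q, x ≠ v + 1 := by
        simp [hx.not_ge, show x ≠ n + 1 by lia]
      simp only [List.nil_append, h_head, List.getLast?_nil, List.getLast?_singleton, ne_eq,
        Option.some.injEq]
      grind
    · have h_head : (∀ v ∈ y :: P ++ n :: Q, x = v + 1 → ∀ z ∈ (y :: P ++ n :: Q).head?, z ≤ x) ↔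
          ∀ v ∈ y :: P ++ Q, x = v + 1 → ∀ z ∈ (y :: P ++ Q).head?, z ≤ x := by
        simp [or_imp, forall_and, show x ≠ n + 1 by lia]
      rw [h_head, List.getLast?_cons_cons, and_assoc]

theorem avoids321_insert_max_iff (hP : ∀ x ∈ P, x < n) (hQ : ∀ x ∈ Q, x < n) :
    Avoids321 (P ++ n :: Q) ↔ Avoids321 (P ++ Q) ∧ Q.Pairwise (· ≤ ·) := by
  have h_first : Q.Pairwise (fun b c ↦ ¬ (c < b ∧ b < n)) ↔ Q.Pairwise (· ≤ ·) :=
    List.Pairwise.iff_of_mem fun hb _ ↦ by grind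
  have h_mid : ∀ a ∈ P, ∀ c ∈ Q, ¬ (c < n ∧ n < a) := by grind
  have h_last : P.Pairwise fun a b ↦ ¬ (n < b ∧ b < a) :=
    List.pairwise_of_forall_mem_list (by grind)
  simp only [Avoids321, List.triplewise_append, List.triplewise_cons, List.pairwise_cons,
    List.forall_mem_cons, forall₂_and, h_first]
  tauto

end Words

section ActiveSites

/-- Site `s` of the reversed word `r` is active if a new maximum may be inserted at index `s`
without creating a forbidden pattern: the letters before it must weakly decrease (because of 321)
and none of them may be one less than the letter after it (because of the Fishburn pattern). -/
def IsActive (r : List ℕ) (s : ℕ) : Prop :=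
  s ≤ r.length ∧ (r.take s).Pairwise (· ≥ ·) ∧ ∀ v ∈ r.take s, r[s]? ≠ some (v + 1)

/-- The largest active site; the active sites are `0, …, lastActive r`. -/
noncomputable def lastActive (r : List ℕ) : ℕ :=
  sSup {s | IsActive r s}

/-- Whether the first letter of a word over `{0, …, n - 1}` is `n - 1`. -/
def headIsMax (n : ℕ) (r : List ℕ) : Bool :=
  r.head?.map (· + 1) = some n

variable {r : List ℕ} {n s : ℕ}

theorem isActive_zero (r : List ℕ) : IsActive r 0 := by
  simp [IsActive]

theorem IsActive.of_succ (h : IsActive r (s + 1)) : IsActive r s := by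
  obtain ⟨hlen, hdec, -⟩ := h
  have hs : s < r.length := by lia
  rw [← List.take_concat_get' r s hs, List.pairwise_append] at hdec
  obtain ⟨hdec, -, h_le⟩ := hdec
  refine ⟨hs.le, hdec, fun v hv hsv ↦ ?_⟩
  have h_next : r[s] = v + 1 := by simpa [hs] using hsv
  have h_prev : v ≥ r[s] := h_le v hv r[s] (by simp)
  lia

theorem IsActive.mono {t : ℕ} (h : IsActive r s) (hts : t ≤ s) : IsActive r t :=
  Nat.decreasingInduction (fun _ _ h ↦ h.of_succ) h hts

theorem isActive_iff_le_lastActive : IsActive r s ↔ s ≤ lastActive r := by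
  have hbdd : BddAbove {s | IsActive r s} := ⟨r.length, fun _ h ↦ h.1⟩
  exact ⟨fun h ↦ le_csSup hbdd h,
    fun h ↦ IsActive.mono (Nat.sSup_mem ⟨0, isActive_zero r⟩ hbdd) h⟩

theorem lastActive_eq (h : IsActive r s) (h_succ : ¬ IsActive r (s + 1)) : lastActive r = s := by
  rw [isActive_iff_le_lastActive] at h h_succ
  lia

theorem lastActive_nil : lastActive [] = 0 :=
  lastActive_eq (isActive_zero []) fun h ↦ by simpa using h.1

theorem isActive_cons_max_iff (hr : ∀ x ∈ r, x < n) :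
    IsActive (n :: r) (s + 1) ↔ IsActive r s := by
  have h_dec : ∀ x ∈ r.take s, n ≥ x := fun x hx ↦ (hr x (List.mem_of_mem_take hx)).le
  have h_next : r[s]? ≠ some (n + 1) := fun h ↦ by
    have := hr _ (List.mem_of_getElem? h)
    lia
  simp only [IsActive, List.length_cons, add_le_add_iff_right, List.take_succ_cons,
    List.pairwise_cons, List.forall_mem_cons, List.getElem?_cons_succ]
  tauto

theorem lastActive_cons_max (hr : ∀ x ∈ r, x < n) : lastActive (n :: r) = lastActive r + 1 :=
  lastActive_eq ((isActive_cons_max_iff hr).mpr (isActive_iff_le_lastActive.mpr le_rfl))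
    fun h ↦ by simpa [isActive_iff_le_lastActive] using (isActive_cons_max_iff hr).mp h

theorem IsActive.insertIdx_of_lt {t : ℕ} (h : IsActive r t) (hts : t < s) (n : ℕ) :
    IsActive (r.insertIdx s n) t := by
  refine ⟨h.1.trans List.length_le_length_insertIdx, ?_⟩
  rw [List.take_insertIdx_eq_take_of_le _ _ _ _ hts.le, List.getElem?_insertIdx_of_lt hts]
  exact h.2

theorem isActive_insertIdx_self_iff (hr : ∀ x ∈ r, x < n) (h : IsActive r (s + 1)) :
    IsActive (r.insertIdx (s + 1) n) (s + 1) ↔ headIsMax n r = false := by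
  obtain ⟨hlen, hdec, -⟩ := h
  have h_len_insert := hlen.trans (List.length_le_length_insertIdx (i := s + 1) (x := n))
  rw [IsActive, List.take_insertIdx_eq_take_of_le _ _ _ _ le_rfl, List.getElem?_insertIdx_self,
    if_pos hlen]
  simp only [h_len_insert, hdec, true_and, headIsMax, decide_eq_false_iff_not, ne_eq,
    Option.some.injEq]
  rcases r with _ | ⟨a, r⟩
  · simp at hlen
  have ha : a < n := hr a List.mem_cons_self
  have h_max : ∀ v ∈ r.take s, v ≤ a := by simpa using (List.pairwise_cons.mp hdec).1
  simp only [List.take_succ_cons, List.forall_mem_cons, List.head?_cons, Option.map_some,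
    Option.some.injEq]
  exact ⟨fun h ↦ Ne.symm h.1, fun h ↦ ⟨Ne.symm h, fun v hv ↦ by grind⟩⟩

theorem not_isActive_insertIdx_succ (hr : ∀ x ∈ r, x < n) (hs : s + 1 ≤ r.length) :
    ¬ IsActive (r.insertIdx (s + 1) n) (s + 2) := by
  rcases r with _ | ⟨a, r⟩
  · simp at hs
  rintro ⟨-, hdec, -⟩
  rw [List.insertIdx_succ_cons, List.take_succ_cons, List.pairwise_cons] at hdec
  have h_mem : n ∈ (r.insertIdx s n).take (s + 1) :=
    List.mem_take_iff_getElem.mpr ⟨s, by grind, by simp⟩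
  exact (hdec.1 n h_mem).not_gt (hr a List.mem_cons_self)

theorem lastActive_insertIdx_succ (hr : ∀ x ∈ r, x < n) (hs : s + 1 ≤ lastActive r) :
    lastActive (r.insertIdx (s + 1) n) = if headIsMax n r then s else s + 1 := by
  have h := isActive_iff_le_lastActive.mpr hs
  have h_self := isActive_insertIdx_self_iff hr h
  cases hc : headIsMax n r
  · exact lastActive_eq (h_self.mpr hc) (not_isActive_insertIdx_succ hr h.1)
  · exact lastActive_eq (h.of_succ.insertIdx_of_lt s.lt_succ_self n) (by simp [h_self, hc])

theorem headIsMax_cons_max (n : ℕ) (r : List ℕ) : headIsMax (n + 1) (n :: r) = true := by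
  simp [headIsMax]

theorem headIsMax_insertIdx_succ (hr : ∀ x ∈ r, x < n) :
    headIsMax (n + 1) (r.insertIdx (s + 1) n) = false := by
  rcases r with _ | ⟨a, r⟩
  · simp [headIsMax]
  · simpa [headIsMax] using (hr a List.mem_cons_self).ne

end ActiveSites

section InsertIdx

variable {α : Type*} {l : List α} {a : α} {i : ℕ}

theorem insertIdx_eq_take_append_cons_drop (hi : i ≤ l.length)
    (a : α) : l.insertIdx i a = l.take i ++ a :: l.drop i := by
  induction l generalizing i with
  | nil => simp_all
  | cons b l ih => cases i <;> simp_all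

theorem idxOf_insertIdx [DecidableEq α] (ha : a ∉ l)
    (hi : i ≤ l.length) : (l.insertIdx i a).idxOf a = i := by
  rw [insertIdx_eq_take_append_cons_drop hi, List.idxOf_append_of_notMem (by grind)]
  simp [hi]

theorem erase_insertIdx [DecidableEq α] (ha : a ∉ l)
    (hi : i ≤ l.length) : (l.insertIdx i a).erase a = l := by
  rw [List.erase_eq_eraseIdx_of_idxOf (idxOf_insertIdx ha hi), List.eraseIdx_insertIdx_self]

theorem insertIdx_idxOf_erase [DecidableEq α] (ha : a ∈ l) :
    (l.erase a).insertIdx (l.idxOf a) a = l := by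
  simpa using List.insertIdx_eraseIdx_getElem (List.idxOf_lt_length_of_mem ha)

end InsertIdx

section GeneratingTree

open Classical in
/-- The reversals of the words of Fishburn permutations of `{0, …, n - 1}` avoiding 321. -/
noncomputable def reversedWords (n : ℕ) : Finset (List ℕ) :=
  {r ∈ (List.range n).permutations.toFinset | FishburnWord r.reverse ∧ Avoids321 r.reverse}

variable {n s : ℕ} {r q : List ℕ}

theorem mem_reversedWords :
    r ∈ reversedWords n ↔
      r.Perm (List.range n) ∧ FishburnWord r.reverse ∧ Avoids321 r.reverse := by
  simp [reversedWords]

theorem lt_of_mem_of_mem_reversedWords (hr : r ∈ reversedWords n) : ∀ x ∈ r, x < n :=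
  fun _ hx ↦ List.mem_range.mp ((mem_reversedWords.mp hr).1.subset hx)

theorem insertIdx_max_mem_reversedWords_iff (hr : ∀ x ∈ r, x < n) (hs : s ≤ r.length) :
    r.insertIdx s n ∈ reversedWords (n + 1) ↔ r ∈ reversedWords n ∧ IsActive r s := by
  have h_perm : (r.insertIdx s n).Perm (List.range (n + 1)) ↔ r.Perm (List.range n) := by
    rw [(List.perm_insertIdx n r hs).congr_left, List.range_succ,
      (List.perm_append_singleton n _).congr_right, List.perm_cons]
  have h_split : (r.drop s).reverse ++ (r.take s).reverse = r.reverse := by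
    rw [← List.reverse_append, List.take_append_drop]
  rw [mem_reversedWords, mem_reversedWords, h_perm, insertIdx_eq_take_append_cons_drop hs,
    List.reverse_append, List.reverse_cons, List.append_assoc, List.singleton_append,
    fishburnWord_insert_max_iff (by grind) (by grind), avoids321_insert_max_iff (by grind)
    (by grind), h_split, List.getLast?_reverse, List.head?_drop, List.pairwise_reverse]
  simp only [List.mem_reverse, IsActive, hs, true_and]
  tauto

theorem max_mem_of_mem_reversedWords_succ (hq : q ∈ reversedWords (n + 1)) : n ∈ q :=
  (mem_reversedWords.mp hq).1.mem_iff.mpr (by simp)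

theorem erase_max_mem_reversedWords_and_isActive (hq : q ∈ reversedWords (n + 1)) :
    q.erase n ∈ reversedWords n ∧ IsActive (q.erase n) (q.idxOf n) := by
  have hn := max_mem_of_mem_reversedWords_succ hq
  have h_nodup : q.Nodup := (mem_reversedWords.mp hq).1.nodup_iff.mpr List.nodup_range
  have h_lt : ∀ x ∈ q.erase n, x < n := fun x hx ↦ by
    have hxq := lt_of_mem_of_mem_reversedWords hq x (List.mem_of_mem_erase hx)
    have hxn := (h_nodup.mem_erase_iff.mp hx).1
    lia
  have h_len : q.idxOf n ≤ (q.erase n).length := by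
    have := List.idxOf_lt_length_of_mem hn
    rw [List.length_erase_of_mem hn]
    lia
  rwa [← insertIdx_max_mem_reversedWords_iff h_lt h_len, insertIdx_idxOf_erase hn]

theorem sum_reversedWords_succ {M : Type*} [AddCommMonoid M] (n : ℕ) (φ : List ℕ → M) :
    ∑ q ∈ reversedWords (n + 1), φ q =
      ∑ r ∈ reversedWords n, ∑ s ∈ range (lastActive r + 1), φ (r.insertIdx s n) := by
  have h_notMem {r : List ℕ} (hr : r ∈ reversedWords n) : n ∉ r :=
    fun h ↦ (lt_of_mem_of_mem_reversedWords hr n h).false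
  have h_active {r : List ℕ} {s : ℕ} (hs : s < lastActive r + 1) : IsActive r s :=
    isActive_iff_le_lastActive.mpr (Nat.le_of_lt_succ hs)
  rw [sum_sigma', eq_comm]
  refine sum_nbij' (fun p ↦ p.1.insertIdx p.2 n) (fun q ↦ ⟨q.erase n, q.idxOf n⟩)
    ?_ ?_ ?_ ?_ fun _ _ ↦ rfl
  · simp only [mem_sigma, mem_range]
    rintro ⟨r, s⟩ ⟨hr, hs⟩
    exact (insertIdx_max_mem_reversedWords_iff (lt_of_mem_of_mem_reversedWords hr)
      (h_active hs).1).mpr ⟨hr, h_active hs⟩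
  · intro q hq
    simp only [mem_sigma, mem_range, Nat.lt_succ_iff, ← isActive_iff_le_lastActive]
    exact erase_max_mem_reversedWords_and_isActive hq
  · simp only [mem_sigma, mem_range]
    rintro ⟨r, s⟩ ⟨hr, hs⟩
    rw [erase_insertIdx (h_notMem hr) (h_active hs).1,
      idxOf_insertIdx (h_notMem hr) (h_active hs).1]
  · exact fun q hq ↦ insertIdx_idxOf_erase (max_mem_of_mem_reversedWords_succ hq)

theorem sum_descendants_reversedWords (l n : ℕ) :
    ∑ r ∈ reversedWords n, descendants l (lastActive r) (headIsMax n r) =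
      descendants (l + n) 0 false := by
  induction n generalizing l with
  | zero =>
    have h_nil : reversedWords 0 = {[]} := by
      ext r
      simp +contextual [mem_reversedWords, FishburnWord, Avoids321]
    simp [h_nil, lastActive_nil, headIsMax]
  | succ n ih =>
    rw [sum_reversedWords_succ, show l + (n + 1) = l + 1 + n by ring, ← ih]
    refine sum_congr rfl fun r hr ↦ ?_
    have h_lt := lt_of_mem_of_mem_reversedWords hr
    rw [sum_range_succ', descendants, List.insertIdx_zero, lastActive_cons_max h_lt,
      headIsMax_cons_max, add_comm]
    refine congrArg _ (sum_congr rfl fun s hs ↦ ?_)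
    rw [lastActive_insertIdx_succ h_lt (mem_range.mp hs), headIsMax_insertIdx_succ h_lt]

theorem card_reversedWords (n : ℕ) : #(reversedWords n) = descendants n 0 false := by
  simpa [descendants] using sum_descendants_reversedWords 0 n

end GeneratingTree

section Permutations

variable {n : ℕ}

theorem permList_perm_range (π : Equiv.Perm (Fin n)) : (permList π).Perm (List.range n) := by
  have h := (Equiv.Perm.map_finRange_perm π).map Fin.val
  rwa [List.map_map, List.map_coe_finRange_eq_range] at h

theorem permList_injective : Function.Injective (permList (n := n)) := by
  intro π σ h
  ext i
  exact List.map_inj_left.mp h i (List.mem_finRange i)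

theorem exists_permList_eq {w : List ℕ} (hw : w.Perm (List.range n)) :
    ∃ π : Equiv.Perm (Fin n), permList π = w := by
  have h_len : w.length = n := by simpa using hw.length_eq
  have h_nodup : w.Nodup := hw.nodup_iff.mpr List.nodup_range
  let f (i : Fin n) : Fin n := ⟨w[i], List.mem_range.mp (hw.subset (List.getElem_mem _))⟩
  have hf : Function.Injective f := fun i j hij ↦
    Fin.ext (h_nodup.getElem_inj_iff.mp (congrArg Fin.val hij))
  refine ⟨Equiv.ofBijective f (Finite.injective_iff_bijective.mp hf), ?_⟩
  exact List.ext_getElem (by simp [permList, h_len]) fun i _ _ ↦ by simp [permList, f]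

theorem isFishburn_iff_fishburnWord (π : Equiv.Perm (Fin n)) :
    IsFishburn π ↔ FishburnWord (permList π) := by
  rw [fishburnWord_iff_getElem, IsFishburn]
  simp only [permList, List.length_map, List.length_finRange, List.getElem_map,
    List.getElem_finRange]
  exact ⟨fun h i k hik hk ↦ h i k (hik.trans hk) hk hik, fun h i k _ hk hik ↦ h i k hik hk⟩

theorem reverse_permList_mem_reversedWords_iff (π : Equiv.Perm (Fin n)) :
    (permList π).reverse ∈ reversedWords n ↔ IsFishburn π ∧ AvoidsPat π [3, 2, 1] := by
  have h_perm := (permList π).reverse_perm.trans (permList_perm_range π)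
  rw [mem_reversedWords, List.reverse_reverse, isFishburn_iff_fishburnWord, AvoidsPat,
    not_seqContains_321_iff, and_iff_right h_perm]

theorem card_fishburn_avoiding_321 (n : ℕ) :
    Nat.card {π : Equiv.Perm (Fin n) // IsFishburn π ∧ AvoidsPat π [3, 2, 1]} =
      #(reversedWords n) := by
  rw [← Nat.card_eq_finsetCard]
  refine Nat.card_eq_of_bijective
    (fun π ↦ ⟨(permList π.1).reverse, (reverse_permList_mem_reversedWords_iff π.1).mpr π.2⟩)
    ⟨fun π σ h ↦ ?_, fun ⟨r, hr⟩ ↦ ?_⟩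
  · exact Subtype.ext (permList_injective (List.reverse_injective (congrArg Subtype.val h)))
  · obtain ⟨π, hπ⟩ := exists_permList_eq (r.reverse_perm.trans (mem_reversedWords.mp hr).1)
    obtain rfl : (permList π).reverse = r := by rw [hπ, List.reverse_reverse]
    exact ⟨⟨π, (reverse_permList_mem_reversedWords_iff π).mp hr⟩, rfl⟩

end Permutations

end Fishburn321

theorem stmt9 (n : ℕ) (hn : 1 ≤ n) :
    (Nat.card {π : Equiv.Perm (Fin n) // IsFishburn π ∧ AvoidsPat π [3, 2, 1]} : ℚ) =
      ∑ j ∈ Finset.range ((n - 1) / 2 + 1),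
        (-1 : ℚ) ^ j / ((n : ℚ) - (j : ℚ)) * (Nat.choose (n - j) j) *
          (Nat.choose (2 * n - 3 * j) (n - j + 1)) := by
  rw [← Fishburn321.ballotSum_one_right hn, Fishburn321.card_fishburn_avoiding_321,
    Fishburn321.card_reversedWords, Fishburn321.descendants_false_eq_ballotSum]
end

section
/- For n > 1, the number of indecomposable Fishburn permutations of size n avoiding the classical pattern 132 is 2^{n−2}. -/
open Finset

/-!
Fishburn permutations avoiding `132` are exactly the permutations without an interior peak, that
is, without positions `i < j < k` such that `π j` exceeds both `π i` and `π k`: given such a triple,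
`132`-avoidance forces every entry left of position `j` to exceed `π k`, and then the least of these
entries starts a Fishburn pattern. In a peak-free permutation the maximum stands first or last, and
adding a new maximum at either end keeps it peak-free; hence there are `2 ^ n` of them in
`S_{n+1}`. For size at least two, those with the maximum first are the indecomposable ones.
-/

section PeakFree

variable {α β γ δ : Type*} [Preorder α] [Preorder β] [LinearOrder γ] [Preorder δ]

/-- A sequence is peak-free if no entry exceeds both an earlier and a later entry. For permutations
this is the simultaneous avoidance of `132` and `231`. -/
def PeakFree (f : α → β) : Prop :=
  ∀ ⦃i j k : α⦄, i < j → j < k → ¬ (f i < f j ∧ f k < f j)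

lemma PeakFree.comp_strictMono {f : α → β} (hf : PeakFree f) {g : δ → α} (hg : StrictMono g) :
    PeakFree (f ∘ g) :=
  fun _ _ _ hij hjk => hf (hg hij) (hg hjk)

lemma peakFree_comp_iff_of_strictMono {g : γ → β} (hg : StrictMono g) {f : α → γ} :
    PeakFree (g ∘ f) ↔ PeakFree f := by
  simp only [PeakFree, Function.comp_apply, hg.lt_iff_lt]

end PeakFree

section Patterns

variable {n : ℕ} {π : Equiv.Perm (Fin n)}

lemma seqContains_permList_iff (π : Equiv.Perm (Fin n)) (p : List ℕ) :
    SeqContains (permList π) p ↔ ∃ f : Fin p.length → Fin n, StrictMono f ∧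
      ∀ i j, p.get i < p.get j ↔ π (f i) < π (f j) := by
  have hlen : (permList π).length = n := by simp [permList]
  have hget (a : Fin (permList π).length) : (permList π).get a = (π (a.cast hlen) : ℕ) := by
    rw [List.get_eq_getElem]
    simp only [permList, List.getElem_map, List.getElem_finRange]
    rfl
  constructor
  · rintro ⟨f, hf, hp⟩
    refine ⟨fun a => (f a).cast hlen, fun _ _ hab => hf hab, fun i j => ?_⟩
    simp only [hp, hget, Fin.lt_def]
  · rintro ⟨f, hf, hp⟩
    refine ⟨fun a => (f a).cast hlen.symm, fun _ _ hab => hf hab, fun i j => ?_⟩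
    simp only [hp, hget, Fin.lt_def, Fin.cast_cast, Fin.cast_eq_self]

lemma avoidsPat_132_iff :
    AvoidsPat π [1, 3, 2] ↔ ∀ ⦃i j k : Fin n⦄, i < j → j < k → ¬ (π i < π k ∧ π k < π j) := by
  rw [AvoidsPat, seqContains_permList_iff]
  constructor
  · rintro h i j k hij hjk ⟨hik, hkj⟩
    refine h ⟨![i, j, k], by simp [hij, hjk], fun a b => ?_⟩
    have := hik.trans hkj
    fin_cases a <;> fin_cases b <;> simp [hik, hkj, this, hik.le, hkj.le, this.le]
  · rintro h ⟨f, hf, hp⟩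
    change Fin 3 → Fin n at f
    exact h (hf (show (0 : Fin 3) < 1 by decide)) (hf (show (1 : Fin 3) < 2 by decide))
      ⟨(hp 0 2).1 (by decide), (hp 2 1).1 (by decide)⟩

lemma PeakFree.isFishburn (hπ : PeakFree π) : IsFishburn π := by
  intro i k hi hk hik hdesc hasc
  have hne : i + 1 ≠ k := by
    rintro rfl
    omega
  exact hπ (i := ⟨i, hi⟩) (j := ⟨i + 1, by omega⟩) (k := ⟨k, hk⟩) (Fin.lt_def.2 i.lt_succ_self)
    (Fin.lt_def.2 (by omega : i + 1 < k)) ⟨hasc, by simp only [Fin.lt_def]; omega⟩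

lemma PeakFree.avoidsPat_132 (hπ : PeakFree π) : AvoidsPat π [1, 3, 2] :=
  avoidsPat_132_iff.2 fun _ _ _ hij hjk ⟨hik, hkj⟩ => hπ hij hjk ⟨hik.trans hkj, hkj⟩

lemma IsFishburn.peakFree (hF : IsFishburn π) (hA : AvoidsPat π [1, 3, 2]) : PeakFree π := by
  rw [avoidsPat_132_iff] at hA
  rintro i j k hij hjk ⟨hπij, hπkj⟩
  have hleft {x : Fin n} (hx : x < j) : π k < π x :=
    (not_lt.1 fun h => hA hx hjk ⟨h, hπkj⟩).lt_of_ne (π.injective.ne (hx.trans hjk).ne')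
  obtain ⟨a, haj, hmin⟩ := exists_min_image ({x | x < j} : Finset (Fin n)) π ⟨i, by simpa⟩
  simp only [mem_filter_univ] at haj hmin
  have hπka : π k < π a := hleft haj
  obtain ⟨b, hb⟩ : ∃ b, (π a : ℕ) = π b + 1 :=
    ⟨π.symm ⟨π a - 1, by omega⟩, by simp only [Equiv.apply_symm_apply]; omega⟩
  have hab : a < b := by
    by_contra! hba
    have := hmin b (hba.trans_lt haj)
    omega
  let c : Fin n := ⟨a + 1, by omega⟩
  have hac : a < c := Fin.lt_def.2 (Nat.lt_succ_self a)
  have hπac : π a < π c := by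
    obtain hcj | hcj := (show c ≤ j from haj).lt_or_eq
    · exact (hmin c hcj).lt_of_ne (π.injective.ne hac.ne)
    · rw [hcj]
      exact (hmin i hij).trans_lt hπij
  exact hF a b a.2 b.2 hab hb hπac

theorem isFishburn_and_avoidsPat_132_iff_peakFree :
    IsFishburn π ∧ AvoidsPat π [1, 3, 2] ↔ PeakFree π :=
  ⟨fun h => h.1.peakFree h.2, fun h => ⟨h.isFishburn, h.avoidsPat_132⟩⟩

end Patterns

section InsertMax

variable {n : ℕ} (p : Fin (n + 1)) (σ : Equiv.Perm (Fin n))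

/-- The permutation obtained from `σ` by inserting a new largest value at position `p`. Every
permutation of `Fin (n + 1)` arises in this way exactly once, which drives the recursive count. -/
def insertMax : Equiv.Perm (Fin (n + 1)) :=
  (finSuccEquiv' p).trans (σ.optionCongr.trans (finSuccEquiv' (Fin.last n)).symm)

@[simp] lemma insertMax_self : insertMax p σ p = Fin.last n := by
  simp [insertMax]

@[simp] lemma insertMax_succAbove (i : Fin n) :
    insertMax p σ (p.succAbove i) = (σ i).castSucc := by
  simp [insertMax]

lemma insertMax_comp_succAbove : insertMax p σ ∘ p.succAbove = Fin.castSucc ∘ σ :=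
  funext (insertMax_succAbove p σ)

lemma insertMax_eq_last_iff {i : Fin (n + 1)} : insertMax p σ i = Fin.last n ↔ i = p := by
  rw [← insertMax_self p σ, (insertMax p σ).apply_eq_iff_eq]

variable (n) in
lemma insertMax_injective :
    Function.Injective fun x : Fin (n + 1) × Equiv.Perm (Fin n) => insertMax x.1 x.2 := by
  rintro ⟨p, σ⟩ ⟨q, τ⟩ (h : insertMax p σ = insertMax q τ)
  obtain rfl : p = q := by rw [← insertMax_eq_last_iff q τ, ← h, insertMax_self]
  have hστ : σ = τ := Equiv.ext fun i => Fin.castSucc_injective n <| by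
    rw [← insertMax_succAbove p σ, h, insertMax_succAbove]
  rw [hστ]

lemma exists_insertMax_eq (π : Equiv.Perm (Fin (n + 1))) : ∃ p σ, insertMax p σ = π := by
  have hcard :
      Nat.card (Fin (n + 1) × Equiv.Perm (Fin n)) = Nat.card (Equiv.Perm (Fin (n + 1))) := by
    simp only [Nat.card_prod, Nat.card_perm, Nat.card_fin, Nat.factorial_succ]
  obtain ⟨⟨p, σ⟩, h⟩ := ((Nat.bijective_iff_injective_and_card _).2
    ⟨insertMax_injective n, hcard⟩).surjective π
  exact ⟨p, σ, h⟩

variable {p σ}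

lemma peakFree_insertMax_iff :
    PeakFree (insertMax p σ) ↔ (p = 0 ∨ p = Fin.last n) ∧ PeakFree σ := by
  have hlt_last {i : Fin (n + 1)} (hi : i ≠ p) : insertMax p σ i < insertMax p σ p := by
    rwa [insertMax_self, Fin.lt_last_iff_ne_last, Ne, insertMax_eq_last_iff]
  constructor
  · refine fun h => ⟨?_, ?_⟩
    · by_contra! hp
      have h0 : 0 < p := Fin.pos_iff_ne_zero.2 hp.1
      have hl : p < Fin.last n := Fin.lt_last_iff_ne_last.2 hp.2
      exact h h0 hl ⟨hlt_last h0.ne, hlt_last hl.ne'⟩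
    · rw [← peakFree_comp_iff_of_strictMono Fin.strictMono_castSucc, ← insertMax_comp_succAbove p]
      exact h.comp_strictMono p.strictMono_succAbove
  · rintro ⟨hp, hσ⟩ i j k hij hjk ⟨hπij, hπkj⟩
    have hi : i ≠ p := by
      rintro rfl
      exact hπij.not_gt (hlt_last hij.ne')
    have hk : k ≠ p := by
      rintro rfl
      exact hπkj.not_gt (hlt_last hjk.ne)
    have hj : j ≠ p := by
      rcases hp with rfl | rfl
      · exact (Fin.pos_of_ne_zero hij.ne_bot).ne'
      · exact (hjk.trans_le (Fin.le_last k)).ne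
    obtain ⟨i, rfl⟩ := Fin.exists_succAbove_eq hi
    obtain ⟨j, rfl⟩ := Fin.exists_succAbove_eq hj
    obtain ⟨k, rfl⟩ := Fin.exists_succAbove_eq hk
    simp only [insertMax_succAbove, Fin.castSucc_lt_castSucc_iff,
      p.strictMono_succAbove.lt_iff_lt] at hij hjk hπij hπkj
    exact hσ hij hjk ⟨hπij, hπkj⟩

lemma isIndecomposable_insertMax_zero (σ : Equiv.Perm (Fin n)) :
    IsIndecomposable (insertMax 0 σ) := by
  rintro ⟨k, hk, hkn, hprefix⟩
  have := hprefix 0 hk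
  rw [insertMax_self, Fin.val_last] at this
  omega

lemma not_isIndecomposable_insertMax_last (hn : 0 < n) (σ : Equiv.Perm (Fin n)) :
    ¬ IsIndecomposable (insertMax (Fin.last n) σ) := by
  refine not_not.2 ⟨n, hn, n.lt_succ_self, fun i hi => ?_⟩
  have hi' : i ≠ Fin.last n := Fin.lt_last_iff_ne_last.1 hi
  exact Fin.lt_last_iff_ne_last.2 ((insertMax_eq_last_iff _ σ).not.2 hi')

end InsertMax

section Counting

lemma setOf_peakFree_succ (n : ℕ) :
    {π : Equiv.Perm (Fin (n + 1)) | PeakFree π} =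
      (fun x : Fin (n + 1) × Equiv.Perm (Fin n) => insertMax x.1 x.2) ''
        ({0, Fin.last n} ×ˢ {σ : Equiv.Perm (Fin n) | PeakFree σ}) := by
  ext π
  obtain ⟨p, σ, rfl⟩ := exists_insertMax_eq π
  rw [(insertMax_injective n).mem_set_image (a := (p, σ))]
  exact peakFree_insertMax_iff

lemma ncard_peakFree (n : ℕ) : {π : Equiv.Perm (Fin (n + 1)) | PeakFree π}.ncard = 2 ^ n := by
  induction n with
  | zero =>
    have : {π : Equiv.Perm (Fin 1) | PeakFree π} = Set.univ :=
      Set.eq_univ_of_forall fun _ i j _ hij => absurd (Subsingleton.elim i j) hij.ne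
    simp [this]
  | succ n ih =>
    have hends : ({0, Fin.last (n + 1)} : Set (Fin (n + 2))).ncard = 2 :=
      Set.ncard_pair Fin.last_pos.ne
    rw [setOf_peakFree_succ, Set.ncard_image_of_injective _ (insertMax_injective _), Set.ncard_prod,
      hends, ih, pow_succ']

lemma setOf_isIndecomposable_peakFree_succ {n : ℕ} (hn : 0 < n) :
    {π : Equiv.Perm (Fin (n + 1)) | IsIndecomposable π ∧ PeakFree π} =
      insertMax 0 '' {σ | PeakFree σ} := by
  ext π
  constructor
  · rintro ⟨hind, hpeak⟩
    obtain ⟨p, σ, rfl⟩ := exists_insertMax_eq π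
    obtain ⟨rfl | rfl, hσ⟩ := peakFree_insertMax_iff.1 hpeak
    · exact ⟨σ, hσ, rfl⟩
    · exact absurd hind (not_isIndecomposable_insertMax_last hn σ)
  · rintro ⟨σ, hσ, rfl⟩
    exact ⟨isIndecomposable_insertMax_zero σ, peakFree_insertMax_iff.2 ⟨.inl rfl, hσ⟩⟩

end Counting

theorem stmt11 (n : ℕ) (hn : 1 < n) :
    Nat.card {π : Equiv.Perm (Fin n) //
        IsIndecomposable π ∧ IsFishburn π ∧ AvoidsPat π [1, 3, 2]} =
      2 ^ (n - 2) := by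
  obtain ⟨m, rfl⟩ : ∃ m, n = m + 2 := ⟨n - 2, by omega⟩
  have hinsert : Function.Injective (insertMax (0 : Fin (m + 2))) :=
    (insertMax_injective (m + 1)).comp (Prod.mk_right_injective 0)
  simp only [isFishburn_and_avoidsPat_132_iff_peakFree]
  calc {π : Equiv.Perm (Fin (m + 2)) | IsIndecomposable π ∧ PeakFree π}.ncard
    _ = (insertMax 0 '' {σ : Equiv.Perm (Fin (m + 1)) | PeakFree σ}).ncard := by
      rw [setOf_isIndecomposable_peakFree_succ m.succ_pos]
    _ = {σ : Equiv.Perm (Fin (m + 1)) | PeakFree σ}.ncard :=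
      Set.ncard_image_of_injective _ hinsert
    _ = 2 ^ m := ncard_peakFree m
end

section
/- The number of indecomposable Fishburn permutations of size n avoiding the classical pattern 231 equals the Catalan number C_{n−1}. -/
open Finset

/-!
In a 231-avoiding word every letter before the maximum is smaller than every letter after it. The
left and right parts of the maximum are therefore arbitrary 231-avoiding words on two consecutive
intervals of values, which is the recursive structure of binary trees, and the left part is a
direct summand of the permutation. Hence a 231-avoiding permutation is indecomposable exactly when
its maximum comes first, and deleting that maximum leaves an arbitrary 231-avoiding word, one letter
shorter. The Fishburn condition is automatic, since a Fishburn pattern is in particular an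
occurrence of 231.
-/

open scoped List

section Avoids231

variable {α : Type*} [LinearOrder α]

/-- A word avoids the classical pattern 231, as a condition on ordered triples of letters of a word
over any linear order. -/
def Avoids231 (w : List α) : Prop :=
  w.Triplewise fun a b c ↦ ¬(c < a ∧ a < b)

theorem avoids231_append_cons_iff {L R : List α} {m : α} (hL : ∀ a ∈ L, a < m)
    (hR : ∀ b ∈ R, b ≤ m) :
    Avoids231 (L ++ m :: R) ↔ Avoids231 L ∧ Avoids231 R ∧ ∀ a ∈ L, ∀ b ∈ R, a ≤ b := by
  simp only [Avoids231, List.triplewise_append, List.triplewise_cons, List.pairwise_cons]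
  constructor
  · rintro ⟨avoidsL, ⟨-, avoidsR⟩, through_max, -⟩
    exact ⟨avoidsL, avoidsR, fun a ha b hb ↦
      not_lt.1 fun hba ↦ (through_max a ha).1 b hb ⟨hba, hL a ha⟩⟩
  · rintro ⟨avoidsL, avoidsR, hLR⟩
    refine ⟨avoidsL, ⟨?_, avoidsR⟩, fun a ha ↦ ⟨?_, ?_⟩, ?_⟩
    · exact List.pairwise_of_forall_mem_list fun b hb _ _ h ↦ (hR b hb).not_gt h.2
    · exact fun b hb h ↦ (hLR a ha b hb).not_gt h.1
    · exact List.pairwise_of_forall_mem_list fun _ _ c hc h ↦ (hLR a ha c hc).not_gt h.1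
    · intro c hc
      refine List.pairwise_of_forall_mem_list fun a ha _ _ h ↦ h.1.not_ge ?_
      rcases List.mem_cons.1 hc with rfl | hc
      · exact (hL a ha).le
      · exact hLR a ha c hc

end Avoids231

section Words

theorem append_cons_perm_range'_iff {L R : List ℕ} {s m : ℕ} :
    L ++ (s + m) :: R ~ List.range' s (m + 1) ↔ L ++ R ~ List.range' s m := by
  rw [List.range'_1_concat, List.perm_middle.congr_left,
    (List.perm_append_singleton _ _).congr_right, List.perm_cons]

theorem perm_range'_and_perm_range'_of_append {L R : List ℕ} {s m : ℕ}
    (h : L ++ R ~ List.range' s m) (hlt : ∀ a ∈ L, ∀ b ∈ R, a < b) :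
    L ~ List.range' s L.length ∧ R ~ List.range' (s + L.length) R.length := by
  obtain rfl : L.length + R.length = m := by simpa using h.length_eq
  have mem_append {x : ℕ} : x ∈ L ++ R ↔ s ≤ x ∧ x < s + (L.length + R.length) := by
    simp [h.mem_iff]
  have interval_subset {a : ℕ} (ha : a ∈ L) : List.range' s (a + 1 - s) ⊆ L := by
    intro x hx
    have hx := List.mem_range'_1.1 hx
    have ha' := mem_append.1 (List.mem_append_left R ha)
    have hxLR : x ∈ L ++ R := mem_append.2 (by lia)
    exact (List.mem_append.1 hxLR).resolve_right fun hxR ↦ by have := hlt a ha x hxR; lia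
  have subset_interval : L ⊆ List.range' s L.length := by
    intro a ha
    have hle : a + 1 - s ≤ L.length := by
      simpa using (List.Nodup.subperm List.nodup_range' (interval_subset ha)).length_le
    have := mem_append.1 (List.mem_append_left R ha)
    exact List.mem_range'_1.2 (by lia)
  have hL : L ~ List.range' s L.length :=
    ((h.nodup_iff.2 List.nodup_range').of_append_left.subperm subset_interval).perm_of_length_le
      (by simp)
  refine ⟨hL, (List.perm_append_left_iff (List.range' s L.length)).1 ?_⟩
  rw [List.range'_append_1]
  exact (hL.symm.append_right R).trans h

/-- The 231-avoiding words in which each of the `m` values `s, …, s + m - 1` occurs once. -/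
def words231 (s m : ℕ) : Set (List ℕ) :=
  {w | w ~ List.range' s m ∧ Avoids231 w}

variable {s m : ℕ}

theorem length_of_mem_words231 {w : List ℕ} (hw : w ∈ words231 s m) : w.length = m := by
  simpa using hw.1.length_eq

theorem mem_iff_of_mem_words231 {w : List ℕ} (hw : w ∈ words231 s m) {x : ℕ} :
    x ∈ w ↔ s ≤ x ∧ x < s + m := by
  rw [hw.1.mem_iff, List.mem_range'_1]

theorem append_cons_mem_words231_iff {L R : List ℕ} :
    L ++ (s + m) :: R ∈ words231 s (m + 1) ↔ L.length + R.length = m ∧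
      L ∈ words231 s L.length ∧ R ∈ words231 (s + L.length) R.length := by
  constructor
  · rintro ⟨hperm, havoids⟩
    rw [append_cons_perm_range'_iff] at hperm
    have lt_max : ∀ x ∈ L ++ R, x < s + m := fun x hx ↦
      (List.mem_range'_1.1 (hperm.subset hx)).2
    rw [List.forall_mem_append] at lt_max
    obtain ⟨avoidsL, avoidsR, hle⟩ :=
      (avoids231_append_cons_iff lt_max.1 fun b hb ↦ (lt_max.2 b hb).le).1 havoids
    have hdisj := (List.nodup_append.1 (hperm.nodup_iff.2 List.nodup_range')).2.2
    obtain ⟨permL, permR⟩ := perm_range'_and_perm_range'_of_append hperm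
      fun a ha b hb ↦ (hle a ha b hb).lt_of_ne (hdisj a ha b hb)
    exact ⟨by simpa using hperm.length_eq, ⟨permL, avoidsL⟩, ⟨permR, avoidsR⟩⟩
  · rintro ⟨rfl, hL, hR⟩
    refine ⟨append_cons_perm_range'_iff.2 ?_, (avoids231_append_cons_iff ?_ ?_).2
      ⟨hL.2, hR.2, ?_⟩⟩
    · rw [← List.range'_append_1]
      exact hL.1.append hR.1
    all_goals grind [mem_iff_of_mem_words231 hL, mem_iff_of_mem_words231 hR]

theorem cons_mem_words231_iff {R : List ℕ} :
    (s + m) :: R ∈ words231 s (m + 1) ↔ R ∈ words231 s m := by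
  have h := append_cons_mem_words231_iff (s := s) (m := m) (L := []) (R := R)
  simp only [List.nil_append, List.length_nil, zero_add, add_zero] at h
  rw [h]
  constructor
  · rintro ⟨rfl, -, hR⟩
    exact hR
  · intro hR
    obtain rfl := length_of_mem_words231 hR
    exact ⟨rfl, ⟨.refl _, .nil⟩, hR⟩

theorem exists_append_cons_of_mem_words231 {w : List ℕ} (hw : w ∈ words231 s (m + 1)) :
    ∃ L R, w = L ++ (s + m) :: R ∧ L.length + R.length = m ∧
      L ∈ words231 s L.length ∧ R ∈ words231 (s + L.length) R.length := by
  have max_mem : s + m ∈ w := (mem_iff_of_mem_words231 hw).2 ⟨by lia, by lia⟩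
  obtain ⟨L, R, rfl⟩ := List.append_of_mem max_mem
  exact ⟨L, R, rfl, append_cons_mem_words231_iff.1 hw⟩

end Words

section TreeWord

/-- The 231-avoiding word with values from `s` on that corresponds to a binary tree: the root
carries the maximum, and the two subtrees give the parts to its left and right. -/
def treeWord : BinaryTree Unit → ℕ → List ℕ
  | .nil, _ => []
  | .node _ l r, s =>
      treeWord l s ++ (s + (l.numNodes + r.numNodes)) :: treeWord r (s + l.numNodes)

theorem treeWord_mem_words231 (t : BinaryTree Unit) (s : ℕ) :
    treeWord t s ∈ words231 s t.numNodes := by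
  induction t generalizing s with
  | nil => exact ⟨.refl _, .nil⟩
  | node _ l r ihl ihr =>
    have hl := length_of_mem_words231 (ihl s)
    have hr := length_of_mem_words231 (ihr (s + l.numNodes))
    refine append_cons_mem_words231_iff.2 ⟨by rw [hl, hr], ?_, ?_⟩
    · simpa only [hl] using ihl s
    · simpa only [hl, hr] using ihr (s + l.numNodes)

theorem treeWord_injective (s : ℕ) : Function.Injective (treeWord · s) := by
  intro t t' h
  induction t generalizing t' s with
  | nil => cases t' <;> simp_all [treeWord]
  | node _ l r ihl ihr =>
    cases t' with
    | nil => simp [treeWord] at h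
    | node _ l' r' =>
      have numNodes_eq : l.numNodes + r.numNodes = l'.numNodes + r'.numNodes := by
        have := congrArg List.length h
        simpa [length_of_mem_words231 (treeWord_mem_words231 _ _), BinaryTree.numNodes] using this
      have max_notMem_left : s + (l'.numNodes + r'.numNodes) ∉ treeWord l s := by
        rw [mem_iff_of_mem_words231 (treeWord_mem_words231 l s)]
        lia
      have max_notMem_right :
          s + (l'.numNodes + r'.numNodes) ∉ treeWord r (s + l.numNodes) := by
        rw [mem_iff_of_mem_words231 (treeWord_mem_words231 r _)]
        lia
      obtain ⟨hl, -, hr⟩ :=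
        (List.append_cons_inj_of_notMem max_notMem_left max_notMem_right).1 h
      obtain rfl := ihl s hl
      obtain rfl := ihr _ hr
      rfl

theorem exists_treeWord_eq {s m : ℕ} {w : List ℕ} (hw : w ∈ words231 s m) :
    ∃ t : BinaryTree Unit, t.numNodes = m ∧ treeWord t s = w := by
  induction m using Nat.strong_induction_on generalizing s w with
  | _ m ih =>
    cases m with
    | zero => exact ⟨.nil, rfl, (List.length_eq_zero_iff.1 (length_of_mem_words231 hw)).symm⟩
    | succ m =>
      obtain ⟨L, R, rfl, hlen, hL, hR⟩ := exists_append_cons_of_mem_words231 hw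
      obtain ⟨l, hl, rfl⟩ := ih L.length (by lia) hL
      obtain ⟨r, hr, rfl⟩ := ih R.length (by lia) hR
      exact ⟨.node () l r, by rw [BinaryTree.numNodes, hl, hr, hlen],
        by rw [treeWord, hl, hr, hlen]⟩

theorem image_treeWord (s m : ℕ) :
    (treeWord · s) '' (BinaryTree.treesOfNumNodesEq m) = words231 s m := by
  ext w
  simp only [BinaryTree.coe_treesOfNumNodesEq, Set.mem_image, Set.mem_ofPred_eq]
  constructor
  · rintro ⟨t, rfl, rfl⟩
    exact treeWord_mem_words231 t s
  · exact exists_treeWord_eq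

theorem ncard_words231 (s m : ℕ) : (words231 s m).ncard = catalan m := by
  rw [← image_treeWord, Set.ncard_image_of_injective _ (treeWord_injective s),
    Set.ncard_coe_finset, BinaryTree.treesOfNumNodesEq_card_eq_catalan]

end TreeWord

section PermList

theorem seqContains_231_iff {w : List ℕ} : SeqContains w [2, 3, 1] ↔ ¬Avoids231 w := by
  simp only [Avoids231, List.triplewise_iff_getElem, not_forall, not_not]
  constructor
  · rintro ⟨f, hf, hiff⟩
    exact ⟨f (0 : Fin 3), f (1 : Fin 3), f (2 : Fin 3), hf (by decide), hf (by decide),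
      (f (2 : Fin 3)).2, (hiff (2 : Fin 3) (0 : Fin 3)).1 (by decide),
      (hiff (0 : Fin 3) (1 : Fin 3)).1 (by decide)⟩
  · rintro ⟨i, j, k, hij, hjk, hk, hki, hij'⟩
    refine ⟨![⟨i, by lia⟩, ⟨j, by lia⟩, ⟨k, hk⟩], ?_, ?_⟩
    · exact Fin.strictMono_iff_lt_succ.2 fun a ↦ by fin_cases a <;> simpa
    · intro a b
      change Fin 3 at a b
      fin_cases a <;> fin_cases b <;> simp <;> lia

variable {n : ℕ} {π : Equiv.Perm (Fin n)}

theorem avoidsPat_231_iff : AvoidsPat π [2, 3, 1] ↔ Avoids231 (permList π) :=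
  not_iff_comm.1 seqContains_231_iff.symm

theorem getElem_permList {i : ℕ} (h : i < (permList π).length) :
    (permList π)[i] = π ⟨i, by simpa [permList] using h⟩ := by
  simp [permList]

theorem isFishburn_of_avoidsPat_231 (h : AvoidsPat π [2, 3, 1]) : IsFishburn π := by
  intro i k hi hk hik hsucc hlt
  have hne : i + 1 ≠ k := by
    rintro rfl
    lia
  rw [avoidsPat_231_iff, Avoids231, List.triplewise_iff_getElem] at h
  have := h i (i + 1) k (by lia) (by lia) (by simpa [permList] using hk)
  simp only [getElem_permList] at this
  lia

theorem permList_injective : Function.Injective (permList (n := n)) := by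
  intro π σ h
  ext i
  exact List.map_inj_left.1 h i (List.mem_finRange i)

theorem permList_perm_range' (π : Equiv.Perm (Fin n)) : permList π ~ List.range' 0 n := by
  have hnodup : (permList π).Nodup :=
    (List.nodup_finRange n).map (Fin.val_injective.comp π.injective)
  have hsubset : permList π ⊆ List.range' 0 n := by
    simp +contextual [permList, List.subset_def]
  exact (hnodup.subperm hsubset).perm_of_length_le (by simp [permList])

theorem exists_permList_eq {w : List ℕ} (h : w ~ List.range' 0 n) :
    ∃ π : Equiv.Perm (Fin n), permList π = w := by
  obtain rfl : w.length = n := by simpa using h.length_eq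
  have get_lt (i : Fin w.length) : w.get i < w.length := by
    simpa using h.subset (w.get_mem i)
  have get_injective : Function.Injective w.get :=
    List.nodup_iff_injective_get.1 (h.nodup_iff.2 List.nodup_range')
  let f (i : Fin w.length) : Fin w.length := ⟨w.get i, get_lt i⟩
  have hf : Function.Injective f := fun i j hij ↦ get_injective (congrArg Fin.val hij)
  exact ⟨.ofBijective f (Finite.injective_iff_bijective.1 hf), List.map_getElem_finRange w⟩

end PermList

section Indecomposable

variable {m : ℕ} {π : Equiv.Perm (Fin (m + 1))}

theorem permList_eq_cons_iff {R : List ℕ} :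
    permList π = m :: R ↔ π 0 = Fin.last m ∧ (permList π).tail = R := by
  simp [permList, List.finRange_succ, Fin.ext_iff]

theorem isIndecomposable_of_apply_zero_eq_last (h : π 0 = Fin.last m) : IsIndecomposable π := by
  rintro ⟨k, hk, hkm, hmaps⟩
  have : m < k := by simpa [h] using hmaps 0 hk
  lia

theorem apply_zero_eq_last_of_isIndecomposable (hπ : IsIndecomposable π)
    (havoids : AvoidsPat π [2, 3, 1]) : π 0 = Fin.last m := by
  obtain ⟨L, R, heq, hlen, hL, -⟩ := exists_append_cons_of_mem_words231
    ⟨permList_perm_range' π, avoidsPat_231_iff.1 havoids⟩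
  rw [zero_add] at heq
  suffices hnil : L = [] by
    subst hnil
    exact (permList_eq_cons_iff.1 heq).1
  by_contra hne
  refine hπ ⟨L.length, List.length_pos_iff.2 hne, by lia, fun i hi ↦ ?_⟩
  have hmem : (π i : ℕ) ∈ L := by
    have hi' : (i : ℕ) < (permList π).length := by simp [permList, i.is_le]
    have : (permList π)[(i : ℕ)] = L[(i : ℕ)] := by simp only [heq, List.getElem_append_left hi]
    rw [getElem_permList] at this
    exact this ▸ List.getElem_mem hi
  simpa using ((mem_iff_of_mem_words231 hL).1 hmem).2

theorem image_permList_indecomposable_fishburn_231 (m : ℕ) :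
    permList '' {π : Equiv.Perm (Fin (m + 1)) |
      IsIndecomposable π ∧ IsFishburn π ∧ AvoidsPat π [2, 3, 1]} =
      (m :: ·) '' words231 0 m := by
  ext w
  constructor
  · rintro ⟨π, ⟨hind, -, havoids⟩, rfl⟩
    have hzero : π 0 = Fin.last m := apply_zero_eq_last_of_isIndecomposable hind havoids
    have heq : permList π = m :: (permList π).tail := permList_eq_cons_iff.2 ⟨hzero, rfl⟩
    have hmem : permList π ∈ words231 0 (m + 1) :=
      ⟨permList_perm_range' π, avoidsPat_231_iff.1 havoids⟩
    refine ⟨(permList π).tail, ?_, heq.symm⟩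
    rwa [← cons_mem_words231_iff, zero_add, ← heq]
  · rintro ⟨R, hR, rfl⟩
    have hmem : m :: R ∈ words231 0 (m + 1) := by
      simpa only [zero_add] using cons_mem_words231_iff.2 hR
    obtain ⟨π, hπ⟩ := exists_permList_eq hmem.1
    have havoids : AvoidsPat π [2, 3, 1] := avoidsPat_231_iff.2 (hπ ▸ hmem.2)
    have hzero : π 0 = Fin.last m := (permList_eq_cons_iff.1 hπ).1
    exact ⟨π, ⟨isIndecomposable_of_apply_zero_eq_last hzero,
      isFishburn_of_avoidsPat_231 havoids, havoids⟩, hπ⟩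

end Indecomposable

theorem stmt14 (n : ℕ) (hn : 1 ≤ n) :
    Nat.card {π : Equiv.Perm (Fin n) //
        IsIndecomposable π ∧ IsFishburn π ∧ AvoidsPat π [2, 3, 1]} =
      catalan (n - 1) := by
  obtain ⟨m, rfl⟩ := Nat.exists_eq_add_of_le' hn
  calc
    _ = {π : Equiv.Perm (Fin (m + 1)) |
          IsIndecomposable π ∧ IsFishburn π ∧ AvoidsPat π [2, 3, 1]}.ncard := rfl
    _ = ((m :: ·) '' words231 0 m).ncard := by
      rw [← image_permList_indecomposable_fishburn_231,
        Set.ncard_image_of_injective _ permList_injective]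
    _ = (words231 0 m).ncard := Set.ncard_image_of_injective _ List.cons_injective
    _ = catalan m := ncard_words231 0 m
end
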